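/- There is a fractional hom(M)-tiling h of the hypergraph M itself which has h_min ≥ 1/3 and weight w(h) = 8. -/

import Mathlib

open Finset

/-- The edge set of the hypergraph `M` on vertex set `{0,…,7}` (corresponding to
`{1,…,8}`) with edges `{1,2,3}`, `{3,4,5}`, `{4,5,6}`, `{6,7,8}`. -/
def MEdges : Finset (Finset (Fin 8)) :=
  {({0, 1, 2} : Finset (Fin 8)), {2, 3, 4}, {3, 4, 5}, {5, 6, 7}}

/-- `h` is a fractional `hom(M)`-tiling of the hypergraph with edge predicate `E`:
(0) all values lie in `[0,1]`; (a) `h v e ≠ 0` implies `e` is an edge containing `v`;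
(b) the total weight at each vertex is at most `1`; (c) each edge `e = {u,v,w}` has
`h u e = h v e ≥ h w e ≥ (2/3) · h u e` for some labeling of its vertices. -/
def IsFracHomTiling {α : Type} [Fintype α] [DecidableEq α]
    (E : Finset α → Prop) (h : α → Finset α → ℝ) : Prop :=
  (∀ v e, 0 ≤ h v e ∧ h v e ≤ 1) ∧
  (∀ v e, h v e ≠ 0 → E e ∧ v ∈ e) ∧
  (∀ v : α, ∑ e : Finset α, h v e ≤ 1) ∧
  (∀ e : Finset α, E e →
    ∃ u v w : α, e = {u, v, w} ∧ u ≠ v ∧ u ≠ w ∧ v ≠ w ∧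
      h u e = h v e ∧ h w e ≤ h v e ∧ 2 / 3 * h u e ≤ h w e)

/-- The weight `w(h)` of a fractional `hom(M)`-tiling. -/
def tilingWeight {α : Type} [Fintype α] [DecidableEq α] (h : α → Finset α → ℝ) : ℝ :=
  ∑ v : α, ∑ e : Finset α, h v e

/-! The vertices `3` and `6` of `M` (`2` and `5` in `Fin 8`) form an exact transversal: every edge
contains precisely one of them. Give the edges `{1,2,3}` and `{6,7,8}` weight `1`, and `{3,4,5}` and
`{4,5,6}` weight `1/2`, and let every edge pay its weight to each of its vertices, discounted by the
factor `2/3` on the transversal. In each edge the two other vertices then receive equal amounts,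
and the transversal vertex `2/3` of that. The edge weights add up to `3/2` at a transversal vertex
and to `1` elsewhere, so every vertex receives exactly `1`, while the least payment is
`2/3 · 1/2 = 1/3`. -/

section TransversalTiling

variable {α : Type*} [DecidableEq α]

/-- The factor by which a vertex scales the weights of its edges: `2/3`, the least ratio allowed
within an edge of a fractional `hom(M)`-tiling, on the set `S`, and `1` elsewhere. -/
noncomputable def discount (S : Finset α) (v : α) : ℝ :=
  if v ∈ S then 2 / 3 else 1

/-- The function `h(v,e)` with which each edge `e` of the hypergraph `E` pays its weight `a e` to
each of its vertices, discounted on `S`. It is intended for sets `S` that meet every edge in exactly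
one vertex. -/
noncomputable def transversalTiling (E : Finset (Finset α)) (S : Finset α) (a : Finset α → ℝ)
    (v : α) (e : Finset α) : ℝ :=
  if e ∈ E ∧ v ∈ e then discount S v * a e else 0

variable {E : Finset (Finset α)} {S : Finset α} {a : Finset α → ℝ} {e : Finset α} {v : α}

lemma discount_of_mem (hv : v ∈ S) : discount S v = 2 / 3 :=
  if_pos hv

lemma discount_of_notMem (hv : v ∉ S) : discount S v = 1 :=
  if_neg hv

lemma two_thirds_le_discount (S : Finset α) (v : α) : 2 / 3 ≤ discount S v := by
  unfold discount
  split_ifs <;> norm_num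

lemma transversalTiling_of_mem (he : e ∈ E) (hv : v ∈ e) :
    transversalTiling E S a v e = discount S v * a e :=
  if_pos ⟨he, hv⟩

lemma mem_of_transversalTiling_ne_zero (h : transversalTiling E S a v e ≠ 0) : e ∈ E ∧ v ∈ e :=
  of_not_not fun hmem => h (if_neg hmem)

lemma transversalTiling_nonneg (ha : ∀ e ∈ E, 0 ≤ a e) (v : α) (e : Finset α) :
    0 ≤ transversalTiling E S a v e := by
  unfold transversalTiling
  split_ifs with h
  · exact mul_nonneg (by linarith [two_thirds_le_discount S v]) (ha e h.1)
  · exact le_rfl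

lemma two_thirds_mul_le_transversalTiling {c : ℝ} (hc : 0 ≤ c) (ha : ∀ e ∈ E, c ≤ a e)
    (h : transversalTiling E S a v e ≠ 0) : 2 / 3 * c ≤ transversalTiling E S a v e := by
  obtain ⟨he, hv⟩ := mem_of_transversalTiling_ne_zero h
  rw [transversalTiling_of_mem he hv]
  have hdiscount := two_thirds_le_discount S v
  exact mul_le_mul hdiscount (ha e he) hc (by linarith)

lemma sum_transversalTiling [Fintype α] (E : Finset (Finset α)) (S : Finset α) (a : Finset α → ℝ)
    (v : α) :
    ∑ e, transversalTiling E S a v e = discount S v * ∑ e ∈ E with v ∈ e, a e := by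
  simp only [transversalTiling, ← sum_filter, mul_sum]
  congr 1
  ext e
  simp

lemma exists_eq_triple_of_card_inter_eq_one (he : #e = 3) (hS : #(e ∩ S) = 1) :
    ∃ u v w : α, e = {u, v, w} ∧ u ≠ v ∧ u ≠ w ∧ v ≠ w ∧ u ∉ S ∧ v ∉ S ∧ w ∈ S := by
  obtain ⟨w, hw_eq⟩ := card_eq_one.mp hS
  have hsdiff : #(e \ S) = 2 := by
    have := card_sdiff_add_card_inter e S
    omega
  obtain ⟨u, v, huv, huv_eq⟩ := card_eq_two.mp hsdiff
  have hu : u ∉ S := (mem_sdiff.mp (huv_eq ▸ mem_insert_self u {v})).2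
  have hv : v ∉ S := (mem_sdiff.mp (huv_eq ▸ mem_insert_of_mem (mem_singleton_self v))).2
  have hw : w ∈ S := (mem_inter.mp (hw_eq ▸ mem_singleton_self w)).2
  refine ⟨u, v, w, ?_, huv, (ne_of_mem_of_not_mem hw hu).symm,
    (ne_of_mem_of_not_mem hw hv).symm, hu, hv, hw⟩
  calc
    e = e \ S ∪ e ∩ S := (sdiff_union_inter e S).symm
    _ = {u, v, w} := by rw [huv_eq, hw_eq, insert_union, singleton_union]

end TransversalTiling

section FracHomTiling

variable {α : Type} [Fintype α] [DecidableEq α]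

theorem isFracHomTiling_transversalTiling {E : Finset (Finset α)} {S : Finset α}
    {a : Finset α → ℝ} (hE : ∀ e ∈ E, #e = 3) (hS : ∀ e ∈ E, #(e ∩ S) = 1)
    (ha : ∀ e ∈ E, 0 ≤ a e) (hload : ∀ v, discount S v * ∑ e ∈ E with v ∈ e, a e ≤ 1) :
    IsFracHomTiling (· ∈ E) (transversalTiling E S a) := by
  have hnonneg := transversalTiling_nonneg (S := S) ha
  have hsum : ∀ v, ∑ e, transversalTiling E S a v e ≤ 1 := fun v =>
    (sum_transversalTiling E S a v).trans_le (hload v)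
  refine ⟨fun v e => ⟨hnonneg v e, ?_⟩, fun v e => mem_of_transversalTiling_ne_zero, hsum,
    fun e he => ?_⟩
  · exact (single_le_sum (fun e _ => hnonneg v e) (mem_univ e)).trans (hsum v)
  · obtain ⟨u, v, w, rfl, huv, huw, hvw, hu, hv, hw⟩ :=
      exists_eq_triple_of_card_inter_eq_one (hE e he) (hS e he)
    refine ⟨u, v, w, rfl, huv, huw, hvw, ?_⟩
    rw [transversalTiling_of_mem he (by simp), transversalTiling_of_mem he (by simp),
      transversalTiling_of_mem he (by simp), discount_of_notMem hu, discount_of_notMem hv,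
      discount_of_mem hw]
    exact ⟨rfl, by linarith [ha _ he], by linarith⟩

lemma tilingWeight_eq_card {h : α → Finset α → ℝ} (hsum : ∀ v, ∑ e, h v e = 1) :
    tilingWeight h = Fintype.card α := by
  simp [tilingWeight, hsum]

end FracHomTiling

/-- The weights on the edges of `M`: the two edges through the common pair `{3, 4}` (the vertices
`4`, `5` of the paper) share the load of that pair equally, the other two edges have weight `1`. -/
noncomputable def mEdgeWeight (e : Finset (Fin 8)) : ℝ :=
  if {3, 4} ⊆ e then 1 / 2 else 1

lemma half_le_mEdgeWeight (e : Finset (Fin 8)) : 1 / 2 ≤ mEdgeWeight e := by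
  unfold mEdgeWeight
  split_ifs <;> norm_num

lemma card_of_mem_MEdges : ∀ e ∈ MEdges, #e = 3 := by
  simp only [MEdges, mem_insert, mem_singleton, forall_eq_or_imp, forall_eq]
  decide

lemma card_inter_of_mem_MEdges : ∀ e ∈ MEdges, #(e ∩ {2, 5}) = 1 := by
  simp only [MEdges, mem_insert, mem_singleton, forall_eq_or_imp, forall_eq]
  decide

lemma sum_MEdges (f : Finset (Fin 8) → ℝ) :
    ∑ e ∈ MEdges, f e = f {0, 1, 2} + f {2, 3, 4} + f {3, 4, 5} + f {5, 6, 7} := by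
  rw [MEdges, sum_insert (by decide), sum_insert (by decide), sum_insert (by decide),
    sum_singleton]
  ring

lemma sum_mEdgeWeight (v : Fin 8) :
    ∑ e ∈ MEdges with v ∈ e, mEdgeWeight e =
      if v ∈ ({2, 5} : Finset (Fin 8)) then 3 / 2 else 1 := by
  have hfirst : mEdgeWeight {0, 1, 2} = 1 := if_neg (by decide)
  have hsecond : mEdgeWeight {2, 3, 4} = 1 / 2 := if_pos (by decide)
  have hthird : mEdgeWeight {3, 4, 5} = 1 / 2 := if_pos (by decide)
  have hfourth : mEdgeWeight {5, 6, 7} = 1 := if_neg (by decide)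
  rw [sum_filter, sum_MEdges, hfirst, hsecond, hthird, hfourth]
  grind

lemma discount_mul_sum_mEdgeWeight (v : Fin 8) :
    discount {2, 5} v * ∑ e ∈ MEdges with v ∈ e, mEdgeWeight e = 1 := by
  rw [sum_mEdgeWeight, discount]
  split_ifs <;> norm_num

theorem frac_homM_tiling_of_M :
    ∃ h : Fin 8 → Finset (Fin 8) → ℝ,
      IsFracHomTiling (· ∈ MEdges) h ∧
      (∀ v e, h v e ≠ 0 → 1 / 3 ≤ h v e) ∧
      tilingWeight h = 8 := by
  refine ⟨transversalTiling MEdges {2, 5} mEdgeWeight, ?tiling, fun v e hne => ?minimum, ?weight⟩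
  case tiling =>
    exact isFracHomTiling_transversalTiling card_of_mem_MEdges card_inter_of_mem_MEdges
      (fun e _ => le_trans (by norm_num) (half_le_mEdgeWeight e))
      fun v => (discount_mul_sum_mEdgeWeight v).le
  case minimum =>
    calc
      (1 / 3 : ℝ) = 2 / 3 * (1 / 2) := by norm_num
      _ ≤ _ := two_thirds_mul_le_transversalTiling (by norm_num)
        (fun e _ => half_le_mEdgeWeight e) hne
  case weight =>
    have hsum : ∀ v, ∑ e, transversalTiling MEdges {2, 5} mEdgeWeight v e = 1 := fun v =>
      (sum_transversalTiling _ _ _ v).trans (discount_mul_sum_mEdgeWeight v)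
    simpa using tilingWeight_eq_card hsum
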